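/- arXiv:1301.5482 — 2 statements merged into one kernel-verified Lean document; each statement's English description precedes it below -/
import Mathlib

section
/- Let C1 ⊆ F_{q^m}^n be a linear code and C2 ⊊ C1 a subcode, let 0 ≤ ρ ≤ n, and let N ≥ n − ρ. Then the minimum over all matrices A ∈ F_q^{N×n} with rank A ≥ n − ρ of min{ d_R(X A^T, X' A^T) : X, X' ∈ C1, X' − X ∉ C2 } equals max(0, M_{R,1}(C1,C2) − ρ). -/
open scoped BigOperators

noncomputable section

variable (q : ℕ) (Fq : Type*) {Fqm : Type*} [Field Fq] [Field Fqm] [Algebra Fq Fqm]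

/-- `V = V^q`: the image of `V` under the coordinatewise `q`-th power map equals `V`
(membership in the family `Γ(F_{q^m}^n)`). -/
def IsGalClosed {n : ℕ} (V : Submodule Fqm (Fin n → Fqm)) : Prop :=
  (fun v : Fin n → Fqm => fun i => v i ^ q) '' (V : Set (Fin n → Fqm)) =
    (V : Set (Fin n → Fqm))

/-- The `i`-th relative dimension/intersection profile (RDIP) of `C1` and `C2`. -/
noncomputable def RDIP {n : ℕ} (C1 C2 : Submodule Fqm (Fin n → Fqm)) (i : ℕ) : ℕ :=
  sSup {d : ℕ | ∃ V : Submodule Fqm (Fin n → Fqm), IsGalClosed q V ∧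
    Module.finrank Fqm ↥V = i ∧
    d = Module.finrank Fqm ↥(C1 ⊓ V) - Module.finrank Fqm ↥(C2 ⊓ V)}

/-- The `i`-th relative generalized rank weight (RGRW) of `C1` and `C2`. -/
noncomputable def RGRW {n : ℕ} (C1 C2 : Submodule Fqm (Fin n → Fqm)) (i : ℕ) : ℕ :=
  sInf {d : ℕ | ∃ V : Submodule Fqm (Fin n → Fqm), IsGalClosed q V ∧
    d = Module.finrank Fqm ↥V ∧
    i ≤ Module.finrank Fqm ↥(C1 ⊓ V) - Module.finrank Fqm ↥(C2 ⊓ V)}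

/-- The rank weight `d_R(x,0)` of a vector: the `F_q`-dimension of the `F_q`-span of
its coordinates. -/
noncomputable def rankWeight {ι : Type*} (x : ι → Fqm) : ℕ :=
  Module.finrank Fq ↥(Submodule.span Fq (Set.range x))

/-- The minimum rank distance of a (nonzero) linear code. -/
noncomputable def minRankDist {ι : Type*} (C : Submodule Fqm (ι → Fqm)) : ℕ :=
  sInf {d : ℕ | ∃ x, x ∈ C ∧ x ≠ 0 ∧ d = rankWeight Fq x}

/-- The dual code with respect to the standard bilinear form `⟨x,y⟩ = ∑ i, x i * y i`. -/
def dualCode {n : ℕ} (V : Submodule Fqm (Fin n → Fqm)) : Submodule Fqm (Fin n → Fqm) where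
  carrier := {x | ∀ v ∈ V, ∑ i, x i * v i = 0}
  add_mem' := by
    intro a b ha hb v hv
    have h1 := ha v hv
    have h2 := hb v hv
    simp only [Set.mem_setOf_eq] at *
    simp only [Pi.add_apply, add_mul]
    rw [Finset.sum_add_distrib, h1, h2, add_zero]
  zero_mem' := by
    intro v hv
    simp
  smul_mem' := by
    intro c x hx v hv
    have h := hx v hv
    simp only [Set.mem_setOf_eq] at *
    simp only [Pi.smul_apply, smul_eq_mul, mul_assoc]
    rw [← Finset.mul_sum, h, mul_zero]


/-- `X Aᵀ ∈ F_{q^m}^N`: the image of a row vector `X ∈ F_{q^m}^n` under the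
`F_{q^m}`-linear map obtained by extending `A ∈ F_q^{N×n}` scalarwise from `F_q`
to `F_{q^m}`. -/
noncomputable def appMat {N n : ℕ} (A : Fin N → Fin n → Fq) (X : Fin n → Fqm) :
    Fin N → Fqm :=
  fun j => ∑ i, X i * algebraMap Fq Fqm (A j i)

/-- The rank over `F_q` of a matrix `A ∈ F_q^{N×n}` (the dimension of its row
space). -/
noncomputable def matRank {N n : ℕ} (A : Fin N → Fin n → Fq) : ℕ :=
  Module.finrank Fq ↥(Submodule.span Fq (Set.range A))

section Helpers

variable {Fq}

theorem rankWeight_eq_range {n : ℕ} (x : Fin n → Fqm) :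
    rankWeight Fq x = Module.finrank Fq ↥(LinearMap.range (Fintype.linearCombination Fq x)) := by
  rw [rankWeight, Fintype.range_linearCombination]

theorem appMat_eq {N n : ℕ} (A : Fin N → Fin n → Fq) (x : Fin n → Fqm) :
    appMat Fq A x = Fintype.linearCombination Fq x ∘ A := by
  funext j
  simp [appMat, Fintype.linearCombination_apply, Algebra.smul_def, mul_comm]

theorem rankWeight_appMat {N n : ℕ} (A : Fin N → Fin n → Fq) (x : Fin n → Fqm) :
    rankWeight Fq (appMat Fq A x) = Module.finrank Fq
      ↥((Submodule.span Fq (Set.range A)).map (Fintype.linearCombination Fq x)) := by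
  rw [rankWeight, appMat_eq, Set.range_comp, Submodule.map_span]

theorem appMat_sub {N n : ℕ} (A : Fin N → Fin n → Fq) (x y : Fin n → Fqm) :
    appMat Fq A x - appMat Fq A y = appMat Fq A (x - y) := by
  funext j
  simp [appMat, sub_mul]

theorem rankWeight_appMat_lower [Finite Fqm] {N n ρ : ℕ} (A : Fin N → Fin n → Fq)
    (x : Fin n → Fqm) (hρ : ρ ≤ n) (hA : n - ρ ≤ matRank Fq A) :
    rankWeight Fq x - ρ ≤ rankWeight Fq (appMat Fq A x) := by
  have : Module.Finite Fq Fqm := Module.Finite.of_finite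
  rw [rankWeight_appMat, rankWeight_eq_range]
  rw [matRank] at hA
  set U := Submodule.span Fq (Set.range A)
  set φ := Fintype.linearCombination Fq x
  obtain ⟨U', hU'⟩ := exists_isCompl U
  have h1 := Submodule.finrank_add_eq_of_isCompl hU'
  rw [Module.finrank_fin_fun] at h1
  have h2 : LinearMap.range φ = U.map φ ⊔ U'.map φ := by
    rw [← Submodule.map_sup, hU'.sup_eq_top, Submodule.map_top]
  have h3 := Submodule.finrank_add_le_finrank_add_finrank (U.map φ) (U'.map φ)
  have h4 := Submodule.finrank_map_le φ U'
  rw [h2]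
  omega

theorem exists_appMat_upper [Finite Fqm] {N n ρ : ℕ}
    (x : Fin n → Fqm) (hN : n - ρ ≤ N) :
    ∃ A : Fin N → Fin n → Fq, n - ρ ≤ matRank Fq A ∧
      rankWeight Fq (appMat Fq A x) ≤ rankWeight Fq x - ρ := by
  have : Module.Finite Fq Fqm := Module.Finite.of_finite
  set φ := Fintype.linearCombination Fq x with hφ
  obtain ⟨K', hK'⟩ := exists_isCompl (LinearMap.ker φ)
  have h1 := Submodule.finrank_add_eq_of_isCompl hK'
  have h1' := LinearMap.finrank_range_add_finrank_ker φ
  have hw : rankWeight Fq x = Module.finrank Fq ↥(LinearMap.range φ) := rankWeight_eq_range x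
  rw [Module.finrank_fin_fun] at h1 h1'
  obtain ⟨t, ht⟩ := exists_linearIndependent_of_le_finrank (R := Fq) (M := K')
    (n := rankWeight Fq x - ρ) (by omega)
  have ht' : LinearIndependent Fq (fun i => (t i : Fin n → Fq)) :=
    ht.map' K'.subtype (Submodule.ker_subtype _)
  set T := Submodule.span Fq (Set.range (fun i => (t i : Fin n → Fq))) with hT
  have hTK : T ≤ K' := by
    rw [hT, Submodule.span_le]; rintro _ ⟨i, rfl⟩; exact (t i).2
  have hTd : Module.finrank Fq T = rankWeight Fq x - ρ := by
    rw [hT, finrank_span_eq_card ht', Fintype.card_fin]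
  have hd : LinearMap.ker φ ⊓ T = ⊥ :=
    (hK'.disjoint.mono_right hTK).eq_bot
  have h5 := Submodule.finrank_sup_add_finrank_inf_eq (LinearMap.ker φ) T
  rw [hd, finrank_bot] at h5
  obtain ⟨v, hv⟩ := exists_linearIndependent_of_le_finrank (R := Fq)
    (M := ↥(LinearMap.ker φ ⊔ T)) (n := n - ρ) (by omega)
  have hv' : LinearIndependent Fq (fun i => (v i : Fin n → Fq)) :=
    hv.map' (LinearMap.ker φ ⊔ T).subtype (Submodule.ker_subtype _)
  refine ⟨fun j => if h : j.1 < n - ρ then (v ⟨j.1, h⟩ : Fin n → Fq) else 0, ?_, ?_⟩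
  · rw [matRank]
    have := finrank_span_eq_card hv'
    rw [Fintype.card_fin] at this
    refine this.symm.le.trans (Submodule.finrank_mono (Submodule.span_mono ?_))
    rintro _ ⟨i, rfl⟩
    exact ⟨⟨i.1, by omega⟩, by simp⟩
  · rw [rankWeight_appMat, ← hφ, ← hTd]
    refine le_trans (Submodule.finrank_mono (?_ : _ ≤ T.map φ)) (Submodule.finrank_map_le φ T)
    have : T.map φ = (LinearMap.ker φ ⊔ T).map φ := by
      rw [Submodule.map_sup, (LinearMap.le_ker_iff_map).1 le_rfl, bot_sup_eq]
    rw [this]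
    apply Submodule.map_mono
    rw [Submodule.span_le]
    rintro _ ⟨i, rfl⟩
    dsimp only
    split_ifs
    · exact (v _).2
    · exact Submodule.zero_mem _

/-- Frobenius on vectors -/
theorem pow_mem_span [Fintype Fq] {n r : ℕ} (hq : Fintype.card Fq = q)
    (c : Fin r → Fin n → Fq) (y : Fin n → Fqm)
    (hy : y ∈ Submodule.span Fqm (Set.range fun k => algebraMap Fq Fqm ∘ c k)) :
    (fun i => y i ^ q) ∈ Submodule.span Fqm (Set.range fun k => algebraMap Fq Fqm ∘ c k) := by
  subst hq
  rw [Submodule.mem_span_range_iff_exists_fun] at hy ⊢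
  obtain ⟨a, rfl⟩ := hy
  refine ⟨fun k => a k ^ Fintype.card Fq, ?_⟩
  funext i
  have := map_sum (FiniteField.frobeniusAlgHom Fq Fqm) (fun k => a k * algebraMap Fq Fqm (c k i))
    Finset.univ
  simp only [FiniteField.coe_frobeniusAlgHom, mul_pow, ← map_pow, FiniteField.pow_card] at this
  simpa [Finset.sum_apply] using this.symm

theorem exists_galClosed [Fintype Fq] [Finite Fqm] {n : ℕ} (hq : Fintype.card Fq = q)
    (x : Fin n → Fqm) :
    ∃ V : Submodule Fqm (Fin n → Fqm), IsGalClosed q V ∧ x ∈ V ∧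
      Module.finrank Fqm V ≤ rankWeight Fq x := by
  have : Module.Finite Fq Fqm := Module.Finite.of_finite
  set E := Submodule.span Fq (Set.range x) with hE
  let b := Module.finBasis Fq E
  let e : Fin n → E := fun i => ⟨x i, Submodule.subset_span ⟨i, rfl⟩⟩
  let c : Fin (Module.finrank Fq E) → Fin n → Fq := fun k i => b.repr (e i) k
  refine ⟨Submodule.span Fqm (Set.range fun k => algebraMap Fq Fqm ∘ c k), ?_, ?_, ?_⟩
  · rw [IsGalClosed]
    refine Set.eq_of_subset_of_ncard_le ?_ ?_ (Set.toFinite _)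
    · rintro _ ⟨y, hy, rfl⟩
      exact pow_mem_span q hq c y hy
    · rw [Set.ncard_image_of_injective]
      intro y z hyz
      funext i
      have := congrFun hyz i
      subst hq
      exact (FiniteField.frobeniusAlgHom Fq Fqm).injective this
  · rw [Submodule.mem_span_range_iff_exists_fun]
    refine ⟨fun k => (b k : Fqm), ?_⟩
    funext i
    have := congrArg E.subtype (b.sum_repr (e i))
    rw [map_sum] at this
    simp only [map_smul, Submodule.subtype_apply, Algebra.smul_def] at this
    simp only [Finset.sum_apply, Pi.smul_apply, Function.comp, smul_eq_mul, c]
    rw [show x i = (e i : Fqm) from rfl, ← this]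
    exact Finset.sum_congr rfl fun k _ => mul_comm _ _
  · refine (finrank_range_le_card _).trans ?_
    rw [Fintype.card_fin]; rfl

theorem pow_mem_of_galClosed {n : ℕ} {V : Submodule Fqm (Fin n → Fqm)}
    (hV : IsGalClosed q V) (k : ℕ) {y : Fin n → Fqm} (hy : y ∈ V) :
    (fun i => y i ^ (q ^ k)) ∈ V := by
  induction k with
  | zero => simpa using hy
  | succ k ih =>
    have : (fun i => (y i ^ (q ^ k)) ^ q) ∈ (V : Set (Fin n → Fqm)) := by
      rw [← hV]; exact ⟨_, ih, rfl⟩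
    simpa [pow_succ, pow_mul] using this

theorem rankWeight_le_of_galClosed [Fintype Fq] [Finite Fqm] {n : ℕ} (hq : Fintype.card Fq = q)
    {V : Submodule Fqm (Fin n → Fqm)} (hV : IsGalClosed q V) {x : Fin n → Fqm} (hx : x ∈ V) :
    rankWeight Fq x ≤ Module.finrank Fqm V := by
  have : Module.Finite Fq Fqm := Module.Finite.of_finite
  let R : Submodule Fq (Fin n → Fq) :=
    (V.restrictScalars Fq).comap (LinearMap.compLeft (Algebra.linearMap Fq Fqm) (Fin n))
  have hR : ∀ a : Fin n → Fq, a ∈ R ↔ algebraMap Fq Fqm ∘ a ∈ V := fun a => Iff.rfl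
  let c := Module.finBasis Fq R
  have hc : LinearIndependent Fq (fun k => (c k : Fin n → Fq)) :=
    c.linearIndependent.map' R.subtype (Submodule.ker_subtype _)
  have hc' : LinearIndependent Fqm (fun k => algebraMap Fq Fqm ∘ (c k : Fin n → Fq)) :=
    linearIndependent_algebraMap_comp_iff.2 hc
  have hRV : Module.finrank Fq R ≤ Module.finrank Fqm V := by
    have h := finrank_span_eq_card hc'
    rw [Fintype.card_fin] at h
    rw [← h]
    apply Submodule.finrank_mono
    rw [Submodule.span_le]
    rintro _ ⟨k, rfl⟩
    exact (hR _).1 (c k).2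
  refine le_trans ?_ hRV
  have htr : ∀ l : Fqm, (fun i => Algebra.trace Fq Fqm (x i * l)) ∈ R := by
    intro l
    rw [hR]
    have : algebraMap Fq Fqm ∘ (fun i => Algebra.trace Fq Fqm (x i * l)) =
        ∑ k ∈ Finset.range (Module.finrank Fq Fqm), fun i => ((l • x) i) ^ (q ^ k) := by
      funext i
      simp only [Function.comp, FiniteField.algebraMap_trace_eq_sum_pow, Finset.sum_apply,
        Nat.card_eq_fintype_card, hq, Pi.smul_apply, smul_eq_mul, mul_comm]
    rw [this]
    exact V.sum_mem fun k _ => pow_mem_of_galClosed q hV k (V.smul_mem l hx)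
  let b := Module.finBasis Fq Fqm
  let ν : Fin (Module.finrank Fq R) → Fqm := fun k =>
    ∑ j, c.repr ⟨_, htr (b j)⟩ k • b.traceDual j
  have hxν : ∀ i, x i = ∑ k, (c k : Fin n → Fq) i • ν k := by
    intro i
    have h1 := b.traceDual.sum_repr (x i)
    simp only [Module.Basis.traceDual_repr_apply, Algebra.traceForm_apply] at h1
    have h2 : ∀ j, Algebra.trace Fq Fqm (x i * b j) =
        ∑ k, c.repr ⟨_, htr (b j)⟩ k * (c k : Fin n → Fq) i := by
      intro j
      have := congrFun (congrArg R.subtype (c.sum_repr ⟨_, htr (b j)⟩)) i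
      rw [map_sum] at this
      simp only [map_smul, Submodule.subtype_apply, Finset.sum_apply, Pi.smul_apply,
        smul_eq_mul] at this
      exact this.symm
    rw [← h1]
    simp only [h2, ν, Finset.smul_sum, Finset.sum_smul]
    rw [Finset.sum_comm]
    simp only [smul_smul, mul_comm]
  rw [rankWeight]
  calc _ ≤ Module.finrank Fq (Submodule.span Fq (Set.range ν)) := by
        apply Submodule.finrank_mono
        rw [Submodule.span_le]
        rintro _ ⟨i, rfl⟩
        rw [hxν i]
        exact Submodule.sum_mem _ fun k _ =>
          Submodule.smul_mem _ _ (Submodule.subset_span ⟨k, rfl⟩)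
    _ ≤ _ := (finrank_range_le_card (R := Fq) ν).trans (Fintype.card_fin _).le

theorem RGRW_eq [Fintype Fq] [Finite Fqm] {n : ℕ} (hq : Fintype.card Fq = q)
    (C1 C2 : Submodule Fqm (Fin n → Fqm)) (h12 : C2 < C1) :
    ∃ x ∈ C1, x ∉ C2 ∧ RGRW q C1 C2 1 = rankWeight Fq x ∧
      ∀ y ∈ C1, y ∉ C2 → rankWeight Fq x ≤ rankWeight Fq y := by
  have key : ∀ y ∈ C1, y ∉ C2 → ∃ V : Submodule Fqm (Fin n → Fqm), IsGalClosed q V ∧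
      Module.finrank Fqm V ≤ rankWeight Fq y ∧
      1 ≤ Module.finrank Fqm ↥(C1 ⊓ V) - Module.finrank Fqm ↥(C2 ⊓ V) := by
    intro y h1 h2
    obtain ⟨V, hV, hyV, hd⟩ := exists_galClosed q hq y
    refine ⟨V, hV, hd, ?_⟩
    have : C2 ⊓ V < C1 ⊓ V := by
      refine lt_of_le_of_ne (inf_le_inf_right _ h12.le) fun h => h2 ?_
      have : y ∈ C2 ⊓ V := h ▸ (⟨h1, hyV⟩ : y ∈ C1 ⊓ V)
      exact this.1
    have := Submodule.finrank_lt_finrank_of_lt this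
    omega
  have le : ∀ y ∈ C1, y ∉ C2 → RGRW q C1 C2 1 ≤ rankWeight Fq y := by
    intro y h1 h2
    obtain ⟨V, hV, hd, h⟩ := key y h1 h2
    refine le_trans ?_ hd
    exact Nat.sInf_le ⟨V, hV, rfl, h⟩
  obtain ⟨y0, hy1, hy2⟩ := SetLike.exists_of_lt h12
  obtain ⟨V0, hV0, -, h0⟩ := key y0 hy1 hy2
  obtain ⟨V, hV, hd, h⟩ := Nat.sInf_mem (s := {d : ℕ | ∃ V : Submodule Fqm (Fin n → Fqm),
    IsGalClosed q V ∧ d = Module.finrank Fqm ↥V ∧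
    1 ≤ Module.finrank Fqm ↥(C1 ⊓ V) - Module.finrank Fqm ↥(C2 ⊓ V)}) ⟨_, V0, hV0, rfl, h0⟩
  have hnle : ¬ (C1 ⊓ V ≤ C2 ⊓ V) := fun hle => by
    have := Submodule.finrank_mono hle
    omega
  obtain ⟨x, hx, hx2⟩ := SetLike.not_le_iff_exists.1 hnle
  have hxC2 : x ∉ C2 := fun h' => hx2 ⟨h', hx.2⟩
  have heq : RGRW q C1 C2 1 = rankWeight Fq x :=
    le_antisymm (le x hx.1 hxC2) ((rankWeight_le_of_galClosed q hq hV hx.2).trans hd.ge)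
  exact ⟨x, hx.1, hxC2, heq, fun y h1 h2 => heq ▸ le y h1 h2⟩

end Helpers

/-- For a linear code `C1 ⊆ F_{q^m}^n`, a subcode `C2 ⊊ C1`,
`0 ≤ ρ ≤ n` and `N ≥ n - ρ`, the minimum over all `A ∈ F_q^{N×n}` with
`rank A ≥ n - ρ` of `min{ d_R(X Aᵀ, X' Aᵀ) : X, X' ∈ C1, X' - X ∉ C2 }` equals
`max(0, M_{R,1}(C1,C2) - ρ)` (natural subtraction). -/
theorem stmt17 (m n N ρ : ℕ) [Fintype Fq] [Fintype Fqm]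
    (hq : Fintype.card Fq = q) (hm : Module.finrank Fq Fqm = m)
    (C1 C2 : Submodule Fqm (Fin n → Fqm)) (h12 : C2 < C1)
    (hρ : ρ ≤ n) (hN : n - ρ ≤ N) :
    sInf {d : ℕ | ∃ A : Fin N → Fin n → Fq,
        n - ρ ≤ matRank Fq A ∧
        d = sInf {e : ℕ | ∃ x ∈ C1, ∃ x' ∈ C1, x' - x ∉ C2 ∧
              e = rankWeight Fq (appMat Fq A x' - appMat Fq A x)}} =
      RGRW q C1 C2 1 - ρ := by
  obtain ⟨x, hx1, hx2, hR, hmin⟩ := RGRW_eq (Fq := Fq) q hq C1 C2 h12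
  rw [hR]
  obtain ⟨A, hA, hAx⟩ := exists_appMat_upper (Fq := Fq) (N := N) (ρ := ρ) x hN
  have hmem : ∀ B : Fin N → Fin n → Fq, rankWeight Fq (appMat Fq B x) ∈
      {e : ℕ | ∃ x ∈ C1, ∃ x' ∈ C1, x' - x ∉ C2 ∧
              e = rankWeight Fq (appMat Fq B x' - appMat Fq B x)} := fun B =>
    ⟨0, C1.zero_mem, x, hx1, by simpa using hx2, by rw [appMat_sub, sub_zero]⟩
  apply le_antisymm
  · refine le_trans (Nat.sInf_le ⟨A, hA, rfl⟩) ((Nat.sInf_le (hmem A)).trans hAx)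
  · refine le_csInf ⟨_, A, hA, rfl⟩ ?_
    rintro _ ⟨B, hB, rfl⟩
    refine le_csInf ⟨_, hmem B⟩ ?_
    rintro _ ⟨y, hy, y', hy', hyy, rfl⟩
    rw [appMat_sub]
    exact (Nat.sub_le_sub_right (hmin _ (C1.sub_mem hy' hy) hyy) ρ).trans
      (rankWeight_appMat_lower B _ hρ hB)

end
end

section
/- Let m ≥ N and let C ⊆ F_{q^m}^N be a nonzero MRD code. Let ℐ ⊆ {1,…,N} be an index set with |ℐ| ≥ N − dim C and |ℐ| ≥ dim C, and let P_ℐ(C) ⊆ F_{q^m}^{|ℐ|} be the punctured code of C to ℐ, i.e., P_ℐ(C) = { P_ℐ(c) : c ∈ C }. Then P_ℐ(C) is an MRD code of length |ℐ| with dim P_ℐ(C) = dim C and minimum rank distance d_R(P_ℐ(C)) = |ℐ| − dim C + 1. -/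
open scoped BigOperators

noncomputable section

variable (q : ℕ) (Fq : Type*) {Fqm : Type*} [Field Fq] [Field Fqm] [Algebra Fq Fqm]

/-- The punctured code `P_ℐ(C)`: the projections to the coordinates in `I` of all
codewords of `C`. -/
def puncture {N : ℕ} (I : Finset (Fin N)) (C : Submodule Fqm (Fin N → Fqm)) :
    Submodule Fqm ({i // i ∈ I} → Fqm) :=
  Submodule.map (LinearMap.funLeft Fqm Fqm (Subtype.val : {i // i ∈ I} → Fin N)) C

/-- The shortened code `C_ℐ`: the projections to the coordinates in `I` of all
codewords of `C` whose coordinates outside `I` are zero. -/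
def shorten {N : ℕ} (I : Finset (Fin N)) (C : Submodule Fqm (Fin N → Fqm)) :
    Submodule Fqm ({i // i ∈ I} → Fqm) :=
  Submodule.map (LinearMap.funLeft Fqm Fqm (Subtype.val : {i // i ∈ I} → Fin N))
    (C ⊓ Submodule.pi ((↑I : Set (Fin N))ᶜ) fun _ => (⊥ : Submodule Fqm Fqm))

theorem rankWeight_le_aux {ι : Type*} [Fintype ι] [DecidableEq ι] [Finite Fqm] (x : ι → Fqm)
    (S : Finset ι) :
    rankWeight Fq x ≤ Module.finrank Fq ↥(Submodule.span Fq (x '' (S : Set ι))) + Sᶜ.card := by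
  classical
  have : Module.Finite Fq Fqm := Module.Finite.of_finite
  have hle : Submodule.span Fq (Set.range x) ≤
      Submodule.span Fq (x '' (S : Set ι)) ⊔
        Submodule.span Fq ((Sᶜ.image x : Finset Fqm) : Set Fqm) := by
    rw [← Submodule.span_union]
    apply Submodule.span_mono
    rintro _ ⟨i, rfl⟩
    by_cases h : i ∈ S
    · exact Or.inl ⟨i, h, rfl⟩
    · refine Or.inr ?_
      rw [Finset.coe_image]
      exact ⟨i, by simpa using h, rfl⟩
  have h1 := Submodule.finrank_mono hle
  have h2 := Submodule.finrank_add_le_finrank_add_finrank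
    (Submodule.span Fq (x '' (S : Set ι)))
    (Submodule.span Fq ((Sᶜ.image x : Finset Fqm) : Set Fqm))
  have h3 := finrank_span_finset_le_card (R := Fq) (Sᶜ.image x)
  have h4 : (Sᶜ.image x).card ≤ Sᶜ.card := Finset.card_image_le
  unfold rankWeight
  unfold Set.finrank at h3
  omega

theorem singleton_aux {ι : Type*} [Fintype ι] [DecidableEq ι] [Finite Fqm]
    (D : Submodule Fqm (ι → Fqm)) (hD : 0 < Module.finrank Fqm ↥D) :
    ∃ x ∈ D, x ≠ 0 ∧ rankWeight Fq x ≤ Fintype.card ι - Module.finrank Fqm ↥D + 1 := by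
  have hk : Module.finrank Fqm ↥D ≤ Fintype.card ι := by
    simpa using Submodule.finrank_le D
  obtain ⟨S, -, hS⟩ := Finset.exists_subset_card_eq
    (s := (Finset.univ : Finset ι)) (n := Module.finrank Fqm ↥D - 1)
    (by rw [Finset.card_univ]; omega)
  let f : ↥D →ₗ[Fqm] ({i // i ∈ S} → Fqm) :=
    (LinearMap.funLeft Fqm Fqm (Subtype.val : {i // i ∈ S} → ι)).comp D.subtype
  have hker : LinearMap.ker f ≠ ⊥ := by
    apply LinearMap.ker_ne_bot_of_finrank_lt
    rw [Module.finrank_fintype_fun_eq_card, Fintype.card_coe]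
    omega
  obtain ⟨x, hx, hx0⟩ := Submodule.exists_mem_ne_zero_of_ne_bot hker
  refine ⟨x.1, x.2, by simpa using hx0, ?_⟩
  have h := rankWeight_le_aux Fq x.1 S
  have hz : Submodule.span Fq (x.1 '' (S : Set ι)) = ⊥ := by
    rw [Submodule.span_eq_bot]
    rintro _ ⟨i, hi, rfl⟩
    exact congrFun (LinearMap.mem_ker.1 hx) ⟨i, hi⟩
  rw [hz, finrank_bot, Finset.card_compl] at h
  omega

/-- Let `m ≥ N` and `C ⊆ F_{q^m}^N` be a nonzero MRD code, and let
`ℐ ⊆ {1,…,N}` with `|ℐ| ≥ N - dim C` and `|ℐ| ≥ dim C`. Then the punctured code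
`P_ℐ(C)` is an MRD code of length `|ℐ|` with `dim P_ℐ(C) = dim C` and
`d_R(P_ℐ(C)) = |ℐ| - dim C + 1`. -/
theorem stmt19 (m N : ℕ) [Fintype Fq] [Fintype Fqm]
    (hq : Fintype.card Fq = q) (hm : Module.finrank Fq Fqm = m) (hmN : N ≤ m)
    (C : Submodule Fqm (Fin N → Fqm)) (hC : C ≠ ⊥)
    (hMRD : minRankDist Fq C = N - Module.finrank Fqm ↥C + 1)
    (I : Finset (Fin N))
    (h1 : N - Module.finrank Fqm ↥C ≤ I.card)
    (h2 : Module.finrank Fqm ↥C ≤ I.card) :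
    Module.finrank Fqm ↥(puncture I C) = Module.finrank Fqm ↥C ∧
    minRankDist Fq (puncture I C) = I.card - Module.finrank Fqm ↥C + 1 ∧
    minRankDist Fq (puncture I C) =
      I.card - Module.finrank Fqm ↥(puncture I C) + 1 := by
  have hfin : Module.Finite Fq Fqm := Module.Finite.of_finite
  have hkpos : 0 < Module.finrank Fqm ↥C := by
    rw [Nat.pos_iff_ne_zero]
    exact fun h => hC (Submodule.finrank_eq_zero.1 h)
  have hIN : I.card ≤ N := by simpa using Finset.card_le_univ I
  have hwt : ∀ x ∈ C, x ≠ 0 → I.card - Module.finrank Fqm ↥C + 1 ≤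
      rankWeight Fq (LinearMap.funLeft Fqm Fqm (Subtype.val : {i // i ∈ I} → Fin N) x) := by
    intro x hx hx0
    have ha : minRankDist Fq C ≤ rankWeight Fq x := Nat.sInf_le ⟨x, hx, hx0, rfl⟩
    have hb := rankWeight_le_aux Fq x I
    have hr : x '' (I : Set (Fin N)) =
        Set.range (LinearMap.funLeft Fqm Fqm (Subtype.val : {i // i ∈ I} → Fin N) x) := by
      ext y
      simp [LinearMap.funLeft]
    rw [hr, Finset.card_compl, Fintype.card_fin] at hb
    change _ ≤ rankWeight Fq _ + _ at hb
    omega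
  have hinj : ∀ x ∈ C,
      LinearMap.funLeft Fqm Fqm (Subtype.val : {i // i ∈ I} → Fin N) x = 0 → x = 0 := by
    intro x hx h0
    by_contra hne
    have h := hwt x hx hne
    rw [h0] at h
    have hz : rankWeight Fq (0 : {i // i ∈ I} → Fqm) = 0 := by
      unfold rankWeight
      have : Submodule.span Fq (Set.range (0 : {i // i ∈ I} → Fqm)) = ⊥ := by
        rw [Submodule.span_eq_bot]
        rintro _ ⟨i, rfl⟩
        rfl
      rw [this, finrank_bot]
    omega
  have hdim : Module.finrank Fqm ↥(puncture I C) = Module.finrank Fqm ↥C := by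
    have hi : Function.Injective
        ((LinearMap.funLeft Fqm Fqm (Subtype.val : {i // i ∈ I} → Fin N)).domRestrict C) := by
      rw [← LinearMap.ker_eq_bot, LinearMap.ker_eq_bot']
      intro x hx
      exact Subtype.ext (hinj x.1 x.2 hx)
    have := LinearMap.finrank_range_of_inj hi
    rw [LinearMap.range_domRestrict] at this
    exact this
  have hdist : minRankDist Fq (puncture I C) = I.card - Module.finrank Fqm ↥C + 1 := by
    obtain ⟨y, hy, hy0, hyw⟩ := singleton_aux Fq (puncture I C) (by omega)
    rw [hdim, Fintype.card_coe] at hyw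
    apply le_antisymm
    · exact le_trans (Nat.sInf_le ⟨y, hy, hy0, rfl⟩) hyw
    · refine le_csInf ⟨_, y, hy, hy0, rfl⟩ ?_
      rintro _ ⟨z, ⟨x, hx, rfl⟩, hz0, rfl⟩
      refine hwt x hx ?_
      rintro rfl
      exact hz0 (map_zero _)
  exact ⟨hdim, hdist, by rw [hdim]; exact hdist⟩

end
end
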